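/- arXiv:2103.09786 — 4 statements merged into one kernel-verified Lean document; each statement's English description precedes it below -/
import Mathlib

section
/- Let α > 1. There exists a constant c = c(α) > 0 such that for every u > 0 and all reals l₁, l₂ with l₁ ≥ 1 and l₂ − l₁ ≥ 2, the intensity measure of the set of ellipses that intersect both the closed ball of radius l₁ centered at the origin and the circle of radius l₂ centered at the origin satisfies μ_{u,α}( { (z,R,V) : E(z,R,V) ∩ closedBall(0,l₁) ≠ ∅ and E(z,R,V) ∩ {x ∈ ℝ² : |x| = l₂} ≠ ∅ } ) ≤ c · u · l₁ · (l₂ − l₁)^{1−α}. -/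
open MeasureTheory Real Set

noncomputable section

/-- The intensity measure of the ellipses model with parameters `u` and `α`, viewed as a
measure on `ℝ² × ℝ × ℝ` (coordinates: center `z = (z₁, z₂)`, major-axis length `R`,
angle `V`), with density `u · α R^{-(1+α)} · (1/π)` with respect to Lebesgue measure,
supported on `R ∈ [1,∞)` and `V ∈ (-π/2, π/2]`. -/
def ellipsesMeasure (u α : ℝ) : Measure (ℝ × ℝ × ℝ × ℝ) :=
  volume.withDensity fun p =>
    if 1 ≤ p.2.2.1 ∧ p.2.2.2 ∈ Ioc (-(π / 2)) (π / 2) then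
      ENNReal.ofReal (u * α * p.2.2.1 ^ (-(1 + α)) / π)
    else 0

/-- The closed ellipse with center `(p.1, p.2.1)`, major axis of length `p.2.2.1` making
angle `p.2.2.2` with the horizontal direction, and minor axis of length `1`. -/
def ellipse (p : ℝ × ℝ × ℝ × ℝ) : Set (ℝ × ℝ) :=
  {x | ∃ t w : ℝ, (2 * t / p.2.2.1) ^ 2 + (2 * w) ^ 2 ≤ 1 ∧
    x = (p.1 + t * Real.cos p.2.2.2 - w * Real.sin p.2.2.2,
         p.2.1 + t * Real.sin p.2.2.2 + w * Real.cos p.2.2.2)}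

/-- The closed Euclidean ball of radius `r` centered at the origin of `ℝ²`. -/
def euclBall (r : ℝ) : Set (ℝ × ℝ) := {x | Real.sqrt (x.1 ^ 2 + x.2 ^ 2) ≤ r}

/-- The Euclidean circle of radius `r` centered at the origin of `ℝ²`. -/
def euclCircle (r : ℝ) : Set (ℝ × ℝ) := {x | Real.sqrt (x.1 ^ 2 + x.2 ^ 2) = r}

/-!
Fix the shape `(R, V)` and write `d = l₂ - l₁`. A crossing ellipse forces its center `z` both
into the annulus `l₂ - R / 2 ≤ |z| ≤ l₁ + R / 2`, because the ellipse lies in the disc of diameter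
`R` about `z`, and into the rectangle of half-sides `l₁ + R / 2` and `l₁ + 1 / 2` aligned with the
axes of the ellipse. The annulus is empty unless `d ≤ R`. Its area is at most of order `(l₁ + 1) R`
when `R ≤ 2 l₁`, and so is the area of the rectangle when `R > 2 l₁`. Integrating `(l₁ + 1) R`
against `R ^ (-(1 + α))` over `R ≥ d` gives `(l₁ + 1) d ^ (1 - α)` up to a constant.
-/

section Lebesgue

lemma volume_closedBall_sdiff_ball (c : ℂ) {r s : ℝ} (hr : 0 ≤ r) (hrs : r ≤ s) :
    volume (Metric.closedBall c s \ Metric.ball c r) = ENNReal.ofReal (π * (s ^ 2 - r ^ 2)) := by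
  have hπ : (NNReal.pi : ENNReal) = ENNReal.ofReal π := by
    rw [← NNReal.coe_real_pi, ENNReal.ofReal_coe_nnreal]
  rw [measure_sdiff ((Metric.ball_subset_ball hrs).trans Metric.ball_subset_closedBall)
      measurableSet_ball.nullMeasurableSet Metric.isBounded_ball.measure_lt_top.ne,
    Complex.volume_closedBall, Complex.volume_ball, hπ, ← ENNReal.ofReal_pow (hr.trans hrs),
    ← ENNReal.ofReal_pow hr, ← ENNReal.ofReal_mul (by positivity),
    ← ENNReal.ofReal_mul (by positivity), ← ENNReal.ofReal_sub _ (by positivity)]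
  congr 1
  ring

lemma volume_reProdIm (s t : Set ℝ) : volume (s ×ℂ t) = volume s * volume t := by
  have h : s ×ℂ t = Complex.measurableEquivRealProd ⁻¹' (s ×ˢ t) := rfl
  rw [h, Complex.volume_preserving_equiv_real_prod.measure_preimage_equiv,
    Measure.volume_eq_prod, Measure.prod_prod]

lemma volume_rotated_rectangle (w : Circle) {a : ℝ} (ha : 0 ≤ a) (b : ℝ) :
    volume {z : ℂ | |(w * z).re| ≤ a ∧ |(w * z).im| ≤ b} = ENNReal.ofReal (4 * a * b) := by
  have h : {z : ℂ | |(w * z).re| ≤ a ∧ |(w * z).im| ≤ b}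
      = (rotation w).toMeasurableEquiv ⁻¹' (Icc (-a) a ×ℂ Icc (-b) b) := by
    ext z
    simp [Complex.mem_reProdIm, abs_le]
  rw [h, (rotation w).measurePreserving.measure_preimage_equiv, volume_reProdIm, Real.volume_Icc,
    Real.volume_Icc, ← ENNReal.ofReal_mul (by linarith)]
  congr 1
  ring

lemma lintegral_Ici_rpow_of_lt {a c : ℝ} (ha : a < -1) (hc : 0 < c) :
    ∫⁻ t in Ici c, ENNReal.ofReal (t ^ a) = ENNReal.ofReal (-c ^ (a + 1) / (a + 1)) := by
  rw [setLIntegral_congr Ioi_ae_eq_Ici.symm, ← integral_Ioi_rpow_of_lt ha hc,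
    ofReal_integral_eq_lintegral_ofReal (integrableOn_Ioi_rpow_of_lt ha hc)]
  filter_upwards [ae_restrict_mem measurableSet_Ioi] with t ht
  exact rpow_nonneg (hc.trans ht).le a

lemma lintegral_rpow_mul_indicator_Ici_le {α K d : ℝ} (hα : 1 < α) (hK : 0 ≤ K) (hd : 0 < d)
    (B : ℝ) (s : Set ℝ) :
    ∫⁻ R in s, ENNReal.ofReal (K * R ^ (-(1 + α))) *
        (Ici d).indicator (fun R => ENNReal.ofReal (B * R)) R ≤
      ENNReal.ofReal (K * B * (d ^ (1 - α) / (α - 1))) := by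
  have htail : 0 ≤ d ^ (1 - α) / (α - 1) := div_nonneg (rpow_nonneg hd.le _) (sub_pos.2 hα).le
  refine (setLIntegral_le_lintegral s _).trans_eq ?_
  calc ∫⁻ R, ENNReal.ofReal (K * R ^ (-(1 + α))) *
          (Ici d).indicator (fun R => ENNReal.ofReal (B * R)) R
      = ∫⁻ R in Ici d, ENNReal.ofReal (K * B) * ENNReal.ofReal (R ^ (-α)) := by
        rw [← lintegral_indicator measurableSet_Ici]
        refine lintegral_congr fun R => ?_
        by_cases hR : R ∈ Ici d
        · have hR₀ : 0 < R := hd.trans_le hR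
          rw [indicator_of_mem hR, indicator_of_mem hR, ← ENNReal.ofReal_mul (by positivity),
            ← ENNReal.ofReal_mul' (by positivity), show -α = -(1 + α) + 1 by ring,
            rpow_add_one hR₀.ne']
          congr 1
          ring
        · rw [indicator_of_notMem hR, indicator_of_notMem hR, mul_zero]
    _ = ENNReal.ofReal (K * B * (d ^ (1 - α) / (α - 1))) := by
        rw [lintegral_const_mul' _ _ ENNReal.ofReal_ne_top,
          lintegral_Ici_rpow_of_lt (by linarith) hd, show -α + 1 = -(α - 1) by ring,
          neg_div_neg_eq, neg_sub, ← ENNReal.ofReal_mul' htail]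

end Lebesgue

section Intensity

lemma lintegral_prod_eq_lintegral_complex {f : ℝ × ℝ × ℝ × ℝ → ENNReal} (hf : Measurable f) :
    ∫⁻ p, f p = ∫⁻ R, ∫⁻ V, ∫⁻ z : ℂ, f (z.re, z.im, R, V) := by
  have hcoord : MeasurePreserving (fun q : (ℝ × ℝ) × ℂ => (q.2.re, q.2.im, q.1)) :=
    (volume_preserving_prodAssoc.comp
      (Complex.volume_preserving_equiv_real_prod.prod (.id volume))).comp
        Measure.measurePreserving_swap
  have hf' : Measurable fun q : (ℝ × ℝ) × ℂ => f (q.2.re, q.2.im, q.1) :=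
    hf.comp hcoord.measurable
  rw [← hcoord.lintegral_comp hf, Measure.volume_eq_prod, lintegral_prod _ hf'.aemeasurable,
    Measure.volume_eq_prod, lintegral_prod _ hf'.lintegral_prod_right'.aemeasurable]

lemma ellipsesMeasure_apply (u α : ℝ) {S : Set (ℝ × ℝ × ℝ × ℝ)} (hS : MeasurableSet S) :
    ellipsesMeasure u α S = ∫⁻ R in Ici 1, ∫⁻ V in Ioc (-(π / 2)) (π / 2),
      ENNReal.ofReal (u * α * R ^ (-(1 + α)) / π) *
        volume {z : ℂ | (z.re, z.im, R, V) ∈ S} := by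
  have hdensity : Measurable fun p : ℝ × ℝ × ℝ × ℝ =>
      if 1 ≤ p.2.2.1 ∧ p.2.2.2 ∈ Ioc (-(π / 2)) (π / 2) then
        ENNReal.ofReal (u * α * p.2.2.1 ^ (-(1 + α)) / π) else 0 := by
    refine Measurable.ite (.inter ?_ ?_) ?_ measurable_const
    · exact measurableSet_le measurable_const measurable_snd.snd.fst
    · exact measurableSet_Ioc.preimage measurable_snd.snd.snd
    · fun_prop
  rw [ellipsesMeasure, withDensity_apply _ hS, ← lintegral_indicator hS,
    lintegral_prod_eq_lintegral_complex (hdensity.indicator hS),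
    ← lintegral_indicator measurableSet_Ici]
  refine lintegral_congr fun R => ?_
  by_cases hR : 1 ≤ R
  · rw [indicator_of_mem (mem_Ici.2 hR), ← lintegral_indicator measurableSet_Ioc]
    refine lintegral_congr fun V => ?_
    have hcenters : MeasurableSet {z : ℂ | (z.re, z.im, R, V) ∈ S} :=
      hS.preimage (by fun_prop : Measurable fun z : ℂ => (z.re, z.im, R, V))
    by_cases hV : V ∈ Ioc (-(π / 2)) (π / 2)
    · rw [indicator_of_mem hV, ← lintegral_indicator_const hcenters]
      simp only [indicator, mem_ofPred_eq, hR, hV, and_self, if_true]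
    · simp only [indicator, hV, and_false, if_false, ite_self, lintegral_zero]
  · simp only [indicator, mem_Ici, hR, false_and, if_false, ite_self, lintegral_zero]

lemma ellipsesMeasure_le_lintegral_of_centers (u α : ℝ) {S : Set (ℝ × ℝ × ℝ × ℝ)}
    {T : ℝ → ℝ → Set ℂ} {g : ℝ → ENNReal}
    (hT : MeasurableSet {q : ℂ × ℝ × ℝ | q.1 ∈ T q.2.1 q.2.2})
    (hST : ∀ (z : ℂ) (R V : ℝ), 1 ≤ R → (z.re, z.im, R, V) ∈ S → z ∈ T R V)
    (hg : ∀ R V : ℝ, 1 ≤ R → volume (T R V) ≤ g R) :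
    ellipsesMeasure u α S ≤
      ∫⁻ R in Ici 1, ENNReal.ofReal (u * α * R ^ (-(1 + α))) * g R := by
  -- `S` need not be measurable, so pass to a measurable superset.
  let S' : Set (ℝ × ℝ × ℝ × ℝ) := {p | 1 ≤ p.2.2.1 → (⟨p.1, p.2.1⟩ : ℂ) ∈ T p.2.2.1 p.2.2.2}
  have hS' : MeasurableSet S' := by
    have hcenter : Measurable fun p : ℝ × ℝ × ℝ × ℝ => (⟨p.1, p.2.1⟩ : ℂ) :=
      Complex.measurableEquivRealProd.symm.measurable.comp
        (by fun_prop : Measurable fun p : ℝ × ℝ × ℝ × ℝ => (p.1, p.2.1))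
    exact .imp (measurableSet_le measurable_const (by fun_prop))
      ((hcenter.prodMk measurable_snd.snd) hT)
  have hSS' : S ⊆ S' := fun p hp hR => hST ⟨p.1, p.2.1⟩ _ _ hR hp
  refine (measure_mono hSS').trans ?_
  rw [ellipsesMeasure_apply u α hS']
  refine setLIntegral_mono' measurableSet_Ici fun R hR => ?_
  have hfiber (V : ℝ) : volume {z : ℂ | (z.re, z.im, R, V) ∈ S'} ≤ g R :=
    (measure_mono fun _ (hz : 1 ≤ R → _) => hz hR).trans (hg R V hR)
  calc ∫⁻ V in Ioc (-(π / 2)) (π / 2), ENNReal.ofReal (u * α * R ^ (-(1 + α)) / π) *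
          volume {z : ℂ | (z.re, z.im, R, V) ∈ S'}
      ≤ ∫⁻ _ in Ioc (-(π / 2)) (π / 2), ENNReal.ofReal (u * α * R ^ (-(1 + α)) / π) * g R := by
        gcongr with V
        exact hfiber V
    _ = ENNReal.ofReal (u * α * R ^ (-(1 + α))) * g R := by
        rw [setLIntegral_const, Real.volume_Ioc, sub_neg_eq_add, add_halves, mul_right_comm,
          ← ENNReal.ofReal_mul' pi_pos.le, div_mul_cancel₀ _ pi_ne_zero]

end Intensity

section Geometry

variable {l₁ l₂ R V : ℝ}

/-- The ellipse `E(0, R, 0)` as a subset of `ℂ`; every other ellipse is a rotated and translated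
copy of one of these. -/
def standardEllipse (R : ℝ) : Set ℂ := {ζ | (2 * ζ.re / R) ^ 2 + (2 * ζ.im) ^ 2 ≤ 1}

lemma mem_ellipse_iff {z x : ℂ} :
    (x.re, x.im) ∈ ellipse (z.re, z.im, R, V) ↔
      ∃ ζ ∈ standardEllipse R, x = z + Circle.exp V * ζ := by
  have hpoint (ζ : ℂ) : x = z + Circle.exp V * ζ ↔
      (x.re, x.im) = (z.re + ζ.re * Real.cos V - ζ.im * Real.sin V,
        z.im + ζ.re * Real.sin V + ζ.im * Real.cos V) := by
    have hre : (z + Circle.exp V * ζ).re = z.re + ζ.re * Real.cos V - ζ.im * Real.sin V := by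
      rw [Circle.coe_exp, Complex.add_re, Complex.mul_re, Complex.exp_ofReal_mul_I_re,
        Complex.exp_ofReal_mul_I_im]
      ring
    have him : (z + Circle.exp V * ζ).im = z.im + ζ.re * Real.sin V + ζ.im * Real.cos V := by
      rw [Circle.coe_exp, Complex.add_im, Complex.mul_im, Complex.exp_ofReal_mul_I_re,
        Complex.exp_ofReal_mul_I_im]
      ring
    rw [Complex.ext_iff, Prod.mk_inj, hre, him]
  simp only [hpoint]
  exact ⟨fun ⟨t, w, h⟩ => ⟨⟨t, w⟩, h⟩, fun ⟨ζ, h⟩ => ⟨ζ.re, ζ.im, h⟩⟩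

lemma mem_euclBall_iff {x : ℂ} {r : ℝ} : (x.re, x.im) ∈ euclBall r ↔ ‖x‖ ≤ r := by
  rw [Complex.norm_eq_sqrt_sq_add_sq]
  rfl

lemma mem_euclCircle_iff {x : ℂ} {r : ℝ} : (x.re, x.im) ∈ euclCircle r ↔ ‖x‖ = r := by
  rw [Complex.norm_eq_sqrt_sq_add_sq]
  rfl

lemma abs_im_le_of_mem_standardEllipse {ζ : ℂ} (hζ : ζ ∈ standardEllipse R) : |ζ.im| ≤ 1 / 2 := by
  have h : (2 * ζ.re / R) ^ 2 + (2 * ζ.im) ^ 2 ≤ 1 := hζ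
  exact abs_le_of_sq_le_sq (by linarith [sq_nonneg (2 * ζ.re / R)]) (by norm_num)

lemma norm_le_of_mem_standardEllipse {ζ : ℂ} (hR : 1 ≤ R) (hζ : ζ ∈ standardEllipse R) :
    ‖ζ‖ ≤ R / 2 := by
  have h : (2 * ζ.re / R) ^ 2 + (2 * ζ.im) ^ 2 ≤ 1 := hζ
  have hR₀ : 0 < R := one_pos.trans_le hR
  have hre : (2 * ζ.re / R) ^ 2 * R ^ 2 = 4 * ζ.re ^ 2 := by
    rw [div_pow, div_mul_cancel₀ _ (pow_ne_zero 2 hR₀.ne')]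
    ring
  have him : ζ.im ^ 2 ≤ ζ.im ^ 2 * R ^ 2 := le_mul_of_one_le_right (sq_nonneg _) (one_le_pow₀ hR)
  rw [Complex.norm_eq_sqrt_sq_add_sq]
  refine Real.sqrt_le_iff.2 ⟨by linarith, ?_⟩
  linarith [mul_le_mul_of_nonneg_right h (sq_nonneg R)]

/-- The centers allowed for an ellipse of length `R` and angle `V` that meets both the disc of
radius `l₁` and the circle of radius `l₂`: an annulus intersected with a rectangle aligned with the
axes of the ellipse. The plane is identified with `ℂ`, so that multiplication by `exp (-V i)` passes
to the coordinates along these axes. -/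
def crossingCenters (l₁ l₂ R V : ℝ) : Set ℂ :=
  {z | (l₂ - R / 2 ≤ ‖z‖ ∧ ‖z‖ ≤ l₁ + R / 2) ∧
    |(Circle.exp (-V) * z).re| ≤ l₁ + R / 2 ∧ |(Circle.exp (-V) * z).im| ≤ l₁ + 1 / 2}

lemma measurableSet_crossingCenters (l₁ l₂ : ℝ) :
    MeasurableSet {q : ℂ × ℝ × ℝ | q.1 ∈ crossingCenters l₁ l₂ q.2.1 q.2.2} := by
  refine IsClosed.measurableSet (.and (.and ?_ ?_) (.and ?_ ?_)) <;>
    exact isClosed_le (by fun_prop) (by fun_prop)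

lemma mem_crossingCenters {z : ℂ} (hR : 1 ≤ R)
    (hball : (ellipse (z.re, z.im, R, V) ∩ euclBall l₁).Nonempty)
    (hcircle : (ellipse (z.re, z.im, R, V) ∩ euclCircle l₂).Nonempty) :
    z ∈ crossingCenters l₁ l₂ R V := by
  obtain ⟨⟨x₁, x₂⟩, hx, hxl⟩ := hball
  obtain ⟨⟨y₁, y₂⟩, hy, hyl⟩ := hcircle
  obtain ⟨ζ, hζ, hxζ⟩ := mem_ellipse_iff (x := ⟨x₁, x₂⟩) |>.1 hx
  obtain ⟨η, hη, hyη⟩ := mem_ellipse_iff (x := ⟨y₁, y₂⟩) |>.1 hy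
  replace hxl : ‖z + Circle.exp V * ζ‖ ≤ l₁ := hxζ ▸ mem_euclBall_iff.1 hxl
  replace hyl : ‖z + Circle.exp V * η‖ = l₂ := hyη ▸ mem_euclCircle_iff.1 hyl
  have hζR := norm_le_of_mem_standardEllipse hR hζ
  have hlower : l₂ ≤ ‖z‖ + R / 2 := by
    rw [← hyl]
    refine (norm_add_le _ _).trans (add_le_add_right ?_ _)
    simpa using norm_le_of_mem_standardEllipse hR hη
  have hupper : ‖z‖ ≤ l₁ + R / 2 := by
    have h := norm_sub_le (z + Circle.exp V * ζ) (Circle.exp V * ζ)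
    rw [add_sub_cancel_right, norm_mul, Circle.norm_coe, one_mul] at h
    linarith
  have haxes : Circle.exp (-V) * z = Circle.exp (-V) * (z + Circle.exp V * ζ) - ζ := by
    rw [mul_add, ← mul_assoc, ← Circle.coe_mul, ← Circle.exp_add, neg_add_cancel, Circle.exp_zero,
      Circle.coe_one, one_mul, add_sub_cancel_right]
  have hnorm : ‖Circle.exp (-V) * (z + Circle.exp V * ζ)‖ ≤ l₁ := by
    rwa [norm_mul, Circle.norm_coe, one_mul]
  refine ⟨⟨by linarith, hupper⟩, ?_, ?_⟩
  · rw [haxes, Complex.sub_re]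
    exact (abs_sub _ _).trans (add_le_add ((Complex.abs_re_le_norm _).trans hnorm)
      ((Complex.abs_re_le_norm ζ).trans hζR))
  · rw [haxes, Complex.sub_im]
    exact (abs_sub _ _).trans (add_le_add ((Complex.abs_im_le_norm _).trans hnorm)
      (abs_im_le_of_mem_standardEllipse hζ))

lemma crossingCenters_eq_empty (hR : R < l₂ - l₁) : crossingCenters l₁ l₂ R V = ∅ := by
  refine eq_empty_of_forall_notMem fun z hz => ?_
  linarith [hz.1.1, hz.1.2]

lemma volume_crossingCenters_le_annulus (h₀ : 0 ≤ l₂ - R / 2) (h : l₂ - R / 2 ≤ l₁ + R / 2) :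
    volume (crossingCenters l₁ l₂ R V) ≤
      ENNReal.ofReal (π * ((l₁ + R / 2) ^ 2 - (l₂ - R / 2) ^ 2)) := by
  rw [← volume_closedBall_sdiff_ball 0 h₀ h]
  refine measure_mono fun z hz => ⟨?_, ?_⟩
  · simpa using hz.1.2
  · simpa using hz.1.1

lemma volume_crossingCenters_le_rectangle (h : 0 ≤ l₁ + R / 2) :
    volume (crossingCenters l₁ l₂ R V) ≤ ENNReal.ofReal (4 * (l₁ + R / 2) * (l₁ + 1 / 2)) := by
  rw [← volume_rotated_rectangle (Circle.exp (-V)) h]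
  exact measure_mono fun z hz => hz.2

lemma volume_crossingCenters_le (hl₁ : 0 ≤ l₁) (hl : l₁ < l₂) (hR : 0 ≤ R) :
    volume (crossingCenters l₁ l₂ R V) ≤ (Ici (l₂ - l₁)).indicator
      (fun R => ENNReal.ofReal (2 * π * (2 * l₁ + 1) * R)) R := by
  rcases lt_or_ge R (l₂ - l₁) with hd | hd
  · rw [crossingCenters_eq_empty hd, measure_empty]
    exact zero_le
  rw [indicator_of_mem (mem_Ici.2 hd)]
  rcases le_or_gt R (2 * l₁) with hshort | hlong
  · refine (volume_crossingCenters_le_annulus (by linarith) (by linarith)).trans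
      (ENNReal.ofReal_le_ofReal ?_)
    calc π * ((l₁ + R / 2) ^ 2 - (l₂ - R / 2) ^ 2) = π * ((l₁ + l₂) * (R - (l₂ - l₁))) := by ring
      _ ≤ π * (2 * (2 * l₁ + 1) * R) := by gcongr <;> linarith
      _ = 2 * π * (2 * l₁ + 1) * R := by ring
  · refine (volume_crossingCenters_le_rectangle (by linarith)).trans
      (ENNReal.ofReal_le_ofReal ?_)
    calc 4 * (l₁ + R / 2) * (l₁ + 1 / 2) ≤ 4 * R * (l₁ + 1 / 2) := by gcongr; linarith
      _ = 2 * 1 * (2 * l₁ + 1) * R := by ring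
      _ ≤ 2 * π * (2 * l₁ + 1) * R := by gcongr; linarith [pi_gt_three]

end Geometry

theorem annulus_crossing_intensity_bound_general {α u l₁ l₂ : ℝ} (hα : 1 < α) (hu : 0 ≤ u)
    (hl₁ : 0 ≤ l₁) (hl : l₁ < l₂) :
    ellipsesMeasure u α
        {p | (ellipse p ∩ euclBall l₁).Nonempty ∧ (ellipse p ∩ euclCircle l₂).Nonempty} ≤
      ENNReal.ofReal (2 * π * α / (α - 1) * u * (2 * l₁ + 1) * (l₂ - l₁) ^ (1 - α)) := by
  calc ellipsesMeasure u α _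
      ≤ ∫⁻ R in Ici 1, ENNReal.ofReal (u * α * R ^ (-(1 + α))) * (Ici (l₂ - l₁)).indicator
          (fun R => ENNReal.ofReal (2 * π * (2 * l₁ + 1) * R)) R :=
        ellipsesMeasure_le_lintegral_of_centers u α (measurableSet_crossingCenters l₁ l₂)
          (fun _ _ _ hR hp => mem_crossingCenters hR hp.1 hp.2)
          (fun _ _ hR => volume_crossingCenters_le hl₁ hl (zero_le_one.trans hR))
    _ ≤ ENNReal.ofReal
          (u * α * (2 * π * (2 * l₁ + 1)) * ((l₂ - l₁) ^ (1 - α) / (α - 1))) :=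
        lintegral_rpow_mul_indicator_Ici_le hα (by positivity) (sub_pos.2 hl) _ _
    _ = ENNReal.ofReal (2 * π * α / (α - 1) * u * (2 * l₁ + 1) * (l₂ - l₁) ^ (1 - α)) := by
        congr 1
        ring

/-- Upper bound for the intensity measure of the set of ellipses that intersect both the
closed ball of radius `l₁` centered at the origin and the circle of radius `l₂` centered
at the origin. -/
theorem annulus_crossing_intensity_bound (α : ℝ) (hα : 1 < α) :
    ∃ c : ℝ, 0 < c ∧ ∀ u : ℝ, 0 < u → ∀ l₁ l₂ : ℝ, 1 ≤ l₁ → 2 ≤ l₂ - l₁ →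
      ellipsesMeasure u α
          {p | (ellipse p ∩ euclBall l₁).Nonempty ∧ (ellipse p ∩ euclCircle l₂).Nonempty} ≤
        ENNReal.ofReal (c * u * l₁ * (l₂ - l₁) ^ (1 - α)) := by
  have hC : 0 < 2 * π * α / (α - 1) := div_pos (by positivity) (sub_pos.2 hα)
  refine ⟨3 * (2 * π * α / (α - 1)), by linarith, fun u hu l₁ l₂ hl₁ hl => ?_⟩
  refine (annulus_crossing_intensity_bound_general hα hu.le (by linarith) (by linarith)).trans
    (ENNReal.ofReal_le_ofReal ?_)
  have hcoeff : 0 ≤ 2 * π * α / (α - 1) * u * (l₂ - l₁) ^ (1 - α) :=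
    mul_nonneg (mul_nonneg hC.le hu.le) (rpow_nonneg (by linarith) _)
  linarith [mul_le_mul_of_nonneg_left (by linarith : 2 * l₁ + 1 ≤ 3 * l₁) hcoeff]
end
end

section
/- Fix d ≥ 1, ε > 0 and γ ∈ (0, 1). There exist b = b(d) ∈ (0,1) and N' = N'(ε, γ, d) such that the following holds. Let x, y ∈ ℤ^d with N := |x − y| ≥ N', let n be the greatest positive integer with n log(1/γ) ≤ log log N − ε log log log N, and set N_k := N^{γ^k}. Then every hierarchy H_n(x,y) = (z_σ : σ ∈ {0,1}^k, 1 ≤ k ≤ n) of depth n that satisfies, for all 0 ≤ k ≤ n−2 and all σ ∈ {0,1}^k, that |z_{σ01} − z_{σ00}|_∞ and |z_{σ10} − z_{σ11}|_∞ both lie in [N_{k+1}/2, N_{k+1}], also satisfies: for all 0 ≤ k ≤ n−2 and all σ ∈ {0,1}^k, b · N_k ≤ |z_{σ01} − z_{σ10}| ≤ b^{−1} · N_k. -/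
open Real Set

noncomputable section

/-- The Euclidean distance between two points of `ℤ^d`. -/
def euclDist (d : ℕ) (x y : Fin d → ℤ) : ℝ :=
  Real.sqrt (∑ i, ((x i : ℝ) - (y i : ℝ)) ^ 2)

/-- The supremum (`ℓ^∞`) distance between two points of `ℤ^d`. -/
def supDist (d : ℕ) (x y : Fin d → ℤ) : ℝ :=
  ⨆ i, |((x i : ℝ) - (y i : ℝ))|

/-!
Write `N_k = N ^ γ ^ k`. The bound on the depth `n` says that
`(log log N) ^ ε ≤ γ ^ n * log N = log N_n`. The left side tends to infinity with `N`, so for every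
constant `C`, once `N` is large, `N_{k+1} = N_k ^ γ` is at most `N_k / C` for all `k ≤ n`.
The points `z_{σ0}` and `z_{σ1}` are the two ends either of the whole hierarchy or of a gap one
level up, hence lie at distance of order `N_k`. Passing from them to `z_{σ01}` and `z_{σ10}` moves
each by at most a constant times `N_{k+1}`, which is negligible against `N_k`.
-/

open Filter

section Lattice

variable {d : ℕ} (x y : Fin d → ℤ)

lemma euclDist_eq_dist_toLp :
    euclDist d x y =
      dist (WithLp.toLp 2 fun i => (x i : ℝ) : EuclideanSpace ℝ (Fin d))
        (WithLp.toLp 2 fun i => (y i : ℝ)) := by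
  simp only [euclDist, EuclideanSpace.dist_eq, Real.dist_eq, sq_abs]

/-- The metric `euclDist` on `ℤ^d`, so that results on metric spaces apply to it. It is not an
instance, because Mathlib already gives `Fin d → ℤ` the supremum metric. -/
abbrev euclPseudoMetricSpace (d : ℕ) : PseudoMetricSpace (Fin d → ℤ) where
  dist := euclDist d
  dist_self x := by simp only [euclDist_eq_dist_toLp, dist_self]
  dist_comm x y := by simp only [euclDist_eq_dist_toLp, dist_comm]
  dist_triangle x y z := by simpa only [euclDist_eq_dist_toLp] using dist_triangle _ _ _

lemma abs_sub_le_supDist (i : Fin d) : |(x i : ℝ) - y i| ≤ supDist d x y :=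
  le_ciSup (f := fun i => |(x i : ℝ) - y i|) (finite_range _).bddAbove i

lemma supDist_nonneg : 0 ≤ supDist d x y :=
  Real.iSup_nonneg fun _ => abs_nonneg _

lemma supDist_le_euclDist : supDist d x y ≤ euclDist d x y := by
  refine Real.iSup_le (fun i => Real.abs_le_sqrt ?_) (Real.sqrt_nonneg _)
  exact Finset.single_le_sum (f := fun i => ((x i : ℝ) - y i) ^ 2) (fun _ _ => sq_nonneg _)
    (Finset.mem_univ i)

lemma euclDist_le_sqrt_mul_supDist : euclDist d x y ≤ √d * supDist d x y := by
  refine Real.sqrt_le_iff.2 ⟨mul_nonneg (Real.sqrt_nonneg _) (supDist_nonneg x y), ?_⟩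
  calc ∑ i, ((x i : ℝ) - y i) ^ 2 ≤ ∑ _i : Fin d, supDist d x y ^ 2 :=
        Finset.sum_le_sum fun i _ =>
          sq_le_sq.2 ((abs_sub_le_supDist x y i).trans (le_abs_self _))
    _ = (√d * supDist d x y) ^ 2 := by
        rw [mul_pow, Real.sq_sqrt d.cast_nonneg, Finset.sum_const, Finset.card_univ,
          Fintype.card_fin, nsmul_eq_mul]

variable {x y} in
lemma euclDist_mem_Icc_of_supDist_mem_Icc {a b : ℝ} (h : supDist d x y ∈ Icc a b) :
    euclDist d x y ∈ Icc a (√d * b) :=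
  ⟨h.1.trans (supDist_le_euclDist x y),
    (euclDist_le_sqrt_mul_supDist x y).trans (mul_le_mul_of_nonneg_left h.2 (Real.sqrt_nonneg _))⟩

end Lattice

section Scales

variable {ε γ C N : ℝ} {n k : ℕ}

lemma mul_rpow_pow_succ_le_rpow_pow (hC : 0 < C) (hN : 0 < N)
    (h : log C ≤ (1 - γ) * (γ ^ k * log N)) : C * N ^ γ ^ (k + 1) ≤ N ^ γ ^ k := by
  rw [← Real.log_le_log_iff (by positivity) (by positivity),
    Real.log_mul (by positivity) (by positivity), Real.log_rpow hN, Real.log_rpow hN]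
  linear_combination h

lemma rpow_log_log_le_pow_mul_log (hγ : 0 < γ) (hN : 1 < log N)
    (h : n * log (1 / γ) ≤ log (log N) - ε * log (log (log N))) :
    log (log N) ^ ε ≤ γ ^ n * log N := by
  have hlog : 0 < log N := one_pos.trans hN
  have hloglog : 0 < log (log N) := Real.log_pos hN
  rw [← Real.log_le_log_iff (by positivity) (by positivity), Real.log_rpow hloglog,
    Real.log_mul (by positivity) (by positivity), Real.log_pow]
  rw [one_div, Real.log_inv] at h
  linear_combination h

lemma eventually_forall_mul_rpow_pow_succ_le (hε : 0 < ε) (hγ0 : 0 < γ) (hγ1 : γ < 1)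
    (hC : 0 < C) :
    ∀ᶠ N : ℝ in atTop, ∀ n : ℕ, n * log (1 / γ) ≤ log (log N) - ε * log (log (log N)) →
      ∀ k ≤ n, C * N ^ γ ^ (k + 1) ≤ N ^ γ ^ k := by
  have hlim : Tendsto (fun N : ℝ => log (log N) ^ ε) atTop atTop :=
    (tendsto_rpow_atTop hε).comp (Real.tendsto_log_atTop.comp Real.tendsto_log_atTop)
  filter_upwards [hlim.eventually_ge_atTop (log C / (1 - γ)), eventually_gt_atTop 0,
    Real.tendsto_log_atTop.eventually_gt_atTop 1] with N hlarge hN hlogN n hn k hk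
  have hγ : 0 < 1 - γ := sub_pos.2 hγ1
  refine mul_rpow_pow_succ_le_rpow_pow hC hN ?_
  rw [← div_le_iff₀' hγ]
  calc log C / (1 - γ) ≤ log (log N) ^ ε := hlarge
    _ ≤ γ ^ n * log N := rpow_log_log_le_pow_mul_log hγ0 hlogN hn
    _ ≤ γ ^ k * log N :=
        mul_le_mul_of_nonneg_right (pow_le_pow_of_le_one hγ0.le hγ1.le hk) (one_pos.trans hlogN).le

end Scales

/-- `z` is a hierarchy of depth `n` connecting `x` to `y`. Binary words are lists of booleans; the
values of `z` at the empty word and at words longer than `n` are junk. -/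
structure IsHierarchy {X : Type*} (n : ℕ) (x y : X) (z : List Bool → X) : Prop where
  left : z [false] = x
  right : z [true] = y
  left_left (σ : List Bool) (hσ : σ.length + 2 ≤ n) : z (σ ++ [false, false]) = z (σ ++ [false])
  right_right (σ : List Bool) (hσ : σ.length + 2 ≤ n) : z (σ ++ [true, true]) = z (σ ++ [true])

/-- The gaps `(z_{σ01}, z_{σ00})` and `(z_{σ10}, z_{σ11})`, for `σ` of length `k ≤ n - 2`, have
length in `I (k + 1)`. -/
def HasGapLengthsIn {X : Type*} [PseudoMetricSpace X] (n : ℕ) (z : List Bool → X)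
    (I : ℕ → Set ℝ) : Prop :=
  ∀ σ : List Bool, σ.length + 2 ≤ n →
    dist (z (σ ++ [false, true])) (z (σ ++ [false, false])) ∈ I (σ.length + 1) ∧
      dist (z (σ ++ [true, false])) (z (σ ++ [true, true])) ∈ I (σ.length + 1)

namespace IsHierarchy

variable {X : Type*} [PseudoMetricSpace X] {n : ℕ} {x y : X} {z : List Bool → X}
  {σ : List Bool}

lemma dist_append_false_append_true_mem {I : ℕ → Set ℝ} (hz : IsHierarchy n x y z)
    (hgap : HasGapLengthsIn n z I) (hxy : dist x y ∈ I 0) (hσ : σ.length + 1 ≤ n) :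
    dist (z (σ ++ [false])) (z (σ ++ [true])) ∈ I σ.length := by
  cases σ using List.reverseRecOn with
  | nil => simpa only [List.nil_append, List.length_nil, hz.left, hz.right] using hxy
  | append_singleton τ c =>
    rw [List.length_append, List.length_singleton] at hσ ⊢
    obtain ⟨hleft, hright⟩ := hgap τ hσ
    cases c
    · simpa only [List.append_assoc, List.cons_append, List.nil_append, dist_comm] using hleft
    · simpa only [List.append_assoc, List.cons_append, List.nil_append] using hright

lemma dist_highway_mem_Icc {A B : ℝ} {L : ℕ → ℝ} (hA : 1 ≤ A) (hB : 1 ≤ B)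
    (hz : IsHierarchy n x y z)
    (hgap : HasGapLengthsIn n z fun k => Icc (L k / A) (B * L k)) (hxy : dist x y = L 0)
    (hσ : σ.length + 2 ≤ n) (hL : 4 * A * B * L (σ.length + 1) ≤ L σ.length) :
    dist (z (σ ++ [false, true])) (z (σ ++ [true, false])) ∈
      Icc (L σ.length / (2 * A)) (2 * B * L σ.length) := by
  have hxy_mem : dist x y ∈ Icc (L 0 / A) (B * L 0) := by
    rw [← hxy]
    exact ⟨div_le_self dist_nonneg hA, le_mul_of_one_le_left dist_nonneg hB⟩
  obtain ⟨hlow, hupp⟩ :=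
    hz.dist_append_false_append_true_mem hgap hxy_mem (Nat.le_of_succ_le hσ)
  have hL0 : 0 ≤ L σ.length :=
    nonneg_of_mul_nonneg_right (dist_nonneg.trans hupp) (one_pos.trans_le hB)
  have hshift : 2 * (B * L (σ.length + 1)) ≤ L σ.length / (2 * A) := by
    rw [le_div_iff₀ (by linarith)]
    linear_combination hL
  have hleft := (hgap σ hσ).1.2
  have hright := (hgap σ hσ).2.2
  rw [hz.left_left σ hσ] at hleft
  rw [hz.right_right σ hσ] at hright
  obtain ⟨hdiff_low, hdiff_upp⟩ := abs_le.1 <|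
    dist_dist_dist_le (z (σ ++ [false, true])) (z (σ ++ [true, false]))
      (z (σ ++ [false])) (z (σ ++ [true]))
  have hhalf : L σ.length / A = 2 * (L σ.length / (2 * A)) := by field_simp
  have hhalf_le : L σ.length / (2 * A) ≤ B * L σ.length :=
    (div_le_self hL0 (by linarith)).trans (le_mul_of_one_le_left hL0 hB)
  constructor
  · linarith only [hlow, hdiff_low, hleft, hright, hshift, hhalf]
  · linarith only [hupp, hdiff_upp, hleft, hright, hshift, hhalf_le]

end IsHierarchy

theorem hierarchy_highway_lengths_general {X : Type*} [PseudoMetricSpace X] {A B : ℝ}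
    (hA : 1 ≤ A) (hB : 1 ≤ B) :
    ∃ b : ℝ, 0 < b ∧ b < 1 ∧
      ∀ ε : ℝ, 0 < ε → ∀ γ : ℝ, 0 < γ → γ < 1 →
        ∃ N' : ℝ, ∀ x y : X, ∀ N : ℝ, N = dist x y → N' ≤ N →
          ∀ n : ℕ, n * log (1 / γ) ≤ log (log N) - ε * log (log (log N)) →
            ∀ z : List Bool → X, IsHierarchy n x y z →
              HasGapLengthsIn n z (fun k => Icc (N ^ γ ^ k / A) (B * N ^ γ ^ k)) →
              ∀ σ : List Bool, σ.length + 2 ≤ n →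
                dist (z (σ ++ [false, true])) (z (σ ++ [true, false])) ∈
                  Icc (b * N ^ γ ^ σ.length) (b⁻¹ * N ^ γ ^ σ.length) := by
  have hA0 : 0 < A := one_pos.trans_le hA
  have hB0 : 0 < B := one_pos.trans_le hB
  have hAB : 1 ≤ A * B := one_le_mul_of_one_le_of_one_le hA hB
  refine ⟨(2 * A * B)⁻¹, by positivity, inv_lt_one_of_one_lt₀ (by linarith), ?_⟩
  intro ε hε γ hγ0 hγ1
  obtain ⟨N', hN'⟩ := eventually_atTop.1 (eventually_forall_mul_rpow_pow_succ_le hε hγ0 hγ1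
    (by positivity : 0 < 4 * A * B))
  refine ⟨N', fun x y N hN hle n hn z hz hgap σ hσ => ?_⟩
  have hN0 : 0 ≤ N := hN ▸ dist_nonneg
  refine Icc_subset_Icc ?_ ?_ (hz.dist_highway_mem_Icc hA hB hgap
    (by rw [pow_zero, Real.rpow_one, hN]) hσ (hN' N hle n hn _ (by omega)))
  · rw [inv_mul_eq_div]
    exact div_le_div_of_nonneg_left (by positivity) (by positivity)
      (le_mul_of_one_le_right (by positivity) hB)
  · rw [inv_inv]
    gcongr
    exact le_mul_of_one_le_right zero_le_two hA

/-- Geometric consequence of the scale conditions on a hierarchy: there are `b = b(d) ∈ (0,1)`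
and `N' = N'(ε, γ, d)` such that for `N := |x - y| ≥ N'` and `n` the greatest positive
integer with `n log(1/γ) ≤ log log N - ε log log log N`, every hierarchy of depth `n`
connecting `x` to `y` (encoded by a map `z` on binary words, words being lists of booleans
with digits appended on the right) whose gaps satisfy
`|z_{σ01} - z_{σ00}|_∞, |z_{σ10} - z_{σ11}|_∞ ∈ [N_{k+1}/2, N_{k+1}]` also satisfies
`b N_k ≤ |z_{σ01} - z_{σ10}| ≤ b⁻¹ N_k` for all `0 ≤ k ≤ n-2` and `σ ∈ {0,1}^k`,
where `N_k := N^{γ^k}`. -/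
theorem hierarchy_highway_lengths (d : ℕ) (hd : 1 ≤ d) :
    ∃ b : ℝ, 0 < b ∧ b < 1 ∧
      ∀ ε : ℝ, 0 < ε → ∀ γ : ℝ, 0 < γ → γ < 1 →
        ∃ N' : ℝ, ∀ x y : Fin d → ℤ, ∀ N : ℝ, N = euclDist d x y → N' ≤ N →
          ∀ n : ℕ, 1 ≤ n →
            (n : ℝ) * Real.log (1 / γ) ≤
              Real.log (Real.log N) - ε * Real.log (Real.log (Real.log N)) →
            (∀ m : ℕ, 1 ≤ m →
              (m : ℝ) * Real.log (1 / γ) ≤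
                Real.log (Real.log N) - ε * Real.log (Real.log (Real.log N)) → m ≤ n) →
            ∀ z : List Bool → (Fin d → ℤ),
              z [false] = x → z [true] = y →
              (∀ σ : List Bool, σ.length + 2 ≤ n →
                z (σ ++ [false, false]) = z (σ ++ [false]) ∧
                z (σ ++ [true, true]) = z (σ ++ [true])) →
              (∀ σ : List Bool, σ.length + 2 ≤ n →
                supDist d (z (σ ++ [false, true])) (z (σ ++ [false, false])) ∈
                    Icc (N ^ (γ ^ (σ.length + 1)) / 2) (N ^ (γ ^ (σ.length + 1))) ∧
                supDist d (z (σ ++ [true, false])) (z (σ ++ [true, true])) ∈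
                    Icc (N ^ (γ ^ (σ.length + 1)) / 2) (N ^ (γ ^ (σ.length + 1)))) →
              ∀ σ : List Bool, σ.length + 2 ≤ n →
                b * N ^ (γ ^ σ.length) ≤
                    euclDist d (z (σ ++ [false, true])) (z (σ ++ [true, false])) ∧
                  euclDist d (z (σ ++ [false, true])) (z (σ ++ [true, false])) ≤
                    b⁻¹ * N ^ (γ ^ σ.length) := by
  obtain ⟨b, hb0, hb1, H⟩ := @hierarchy_highway_lengths_general _ (euclPseudoMetricSpace d) 2 (√d)
    one_le_two (Real.one_le_sqrt.2 (Nat.one_le_cast.2 hd))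
  exact ⟨b, hb0, hb1, fun ε hε γ hγ0 hγ1 => (H ε hε γ hγ0 hγ1).imp
    fun N' hN' x y N hN hle n _ hn _ z hx hy hz hgap =>
      hN' x y N hN hle n hn z ⟨hx, hy, fun σ hσ => (hz σ hσ).1, fun σ hσ => (hz σ hσ).2⟩
        fun σ hσ => (hgap σ hσ).imp euclDist_mem_Icc_of_supDist_mem_Icc
          euclDist_mem_Icc_of_supDist_mem_Icc⟩
end
end

section
/- Let I_1, …, I_m be finitely many closed intervals of ℝ with [0,1] ⊆ I_1 ∪ ⋯ ∪ I_m. Then there exist n ≤ m and indices j_1, …, j_n ∈ {1, …, m} such that [0,1] ⊆ I_{j_1} ∪ ⋯ ∪ I_{j_n}, consecutive intervals intersect (I_{j_k} ∩ I_{j_{k+1}} ≠ ∅ for 1 ≤ k < n), and non-consecutive intervals are disjoint (I_{j_k} ∩ I_{j_l} = ∅ whenever |k − l| ≥ 2). -/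
open Set

/-!
In a minimal subcover every member contains a private point, one that lies in no other member. Order
the members along their private points. If two members with another one between them met, then by
convexity their union would contain the private point in between. Likewise the segment between two
consecutive private points is covered by the two corresponding members alone; these are closed and
the segment is connected, so they intersect.
-/

section

variable {α ι κ : Type*}

/-- `p` is a system of private points for the family of sets `A`: each `p i` lies in `A i` and in no
other member, which certifies that no member of `A` is redundant. -/
def IsPrivateSystem (A : ι → Set α) (p : ι → α) : Prop :=
  ∀ i j, p i ∈ A j ↔ i = j

namespace IsPrivateSystem

variable {A : ι → Set α} {p : ι → α}

theorem mem (h : IsPrivateSystem A p) (i : ι) : p i ∈ A i :=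
  (h i i).2 rfl

theorem notMem (h : IsPrivateSystem A p) {i j : ι} (hij : i ≠ j) : p i ∉ A j :=
  mt (h i j).1 hij

theorem injective (h : IsPrivateSystem A p) : p.Injective := fun i j hij =>
  (h i j).1 (hij ▸ h.mem j)

theorem comp (h : IsPrivateSystem A p) {e : κ → ι} (he : e.Injective) :
    IsPrivateSystem (A ∘ e) (p ∘ e) := fun i j =>
  (h (e i) (e j)).trans he.eq_iff

theorem exists_of_minimal_cover {K : Set α} {S : Set ι}
    (hS : Minimal (fun T : Set ι => K ⊆ ⋃ i ∈ T, A i) S) :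
    ∃ p : S → α, (∀ i, p i ∈ K) ∧ IsPrivateSystem (fun i : S => A i) p := by
  have exists_private (i : S) : ∃ x ∈ K, ∀ j : S, x ∈ A j ↔ i = j := by
    have not_cover : ¬ K ⊆ ⋃ j ∈ S \ {↑i}, A j :=
      hS.not_prop_of_lt (sdiff_singleton_ssubset.2 i.2)
    obtain ⟨x, hxK, hx⟩ := not_subset.1 not_cover
    have eq_of_mem (j : ι) (hj : j ∈ S) (hxj : x ∈ A j) : j = i := by
      by_contra hji
      exact hx (mem_biUnion ⟨hj, hji⟩ hxj)
    obtain ⟨j, hj, hxj⟩ := mem_iUnion₂.1 (hS.prop hxK)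
    have hxi : x ∈ A i := eq_of_mem j hj hxj ▸ hxj
    refine ⟨x, hxK, fun k => ⟨fun hxk => ?_, fun hik => hik ▸ hxi⟩⟩
    exact (Subtype.ext (eq_of_mem k k.2 hxk)).symm
  choose p hpK hp using exists_private
  exact ⟨p, hpK, hp⟩

theorem disjoint_of_lt_of_lt [Preorder ι] [LinearOrder α] (h : IsPrivateSystem A p)
    (hp : StrictMono p) {i j k : ι} (hi : (A i).OrdConnected) (hk : (A k).OrdConnected)
    (hij : i < j) (hjk : j < k) : Disjoint (A i) (A k) := by
  refine disjoint_left.2 fun x hxi hxk => ?_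
  rcases le_total (p j) x with hx | hx
  · exact h.notMem hij.ne' (hi.out (h.mem i) hxi ⟨(hp hij).le, hx⟩)
  · exact h.notMem hjk.ne (hk.out hxk (h.mem k) ⟨hx, (hp hjk).le⟩)

theorem Icc_subset_union_of_covBy [LinearOrder ι] [Preorder α] (h : IsPrivateSystem A p)
    (hp : StrictMono p) (hA : ∀ i, (A i).OrdConnected) {i j : ι} (hij : i ⋖ j)
    (hcover : Icc (p i) (p j) ⊆ ⋃ l, A l) : Icc (p i) (p j) ⊆ A i ∪ A j := by
  intro x hx
  obtain ⟨l, hxl⟩ := mem_iUnion.1 (hcover hx)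
  have hil : i ≤ l := by
    by_contra! hli
    exact h.notMem hli.ne' ((hA l).out (h.mem l) hxl ⟨(hp hli).le, hx.1⟩)
  have hlj : l ≤ j := by
    by_contra! hjl
    exact h.notMem hjl.ne ((hA l).out hxl (h.mem l) ⟨hx.2, (hp hjl).le⟩)
  rcases hij.eq_or_eq hil hlj with rfl | rfl
  · exact .inl hxl
  · exact .inr hxl

theorem inter_nonempty_of_covBy [LinearOrder ι] [ConditionallyCompleteLinearOrder α]
    [DenselyOrdered α] [TopologicalSpace α] [OrderTopology α] (h : IsPrivateSystem A p)
    (hp : StrictMono p) (hA : ∀ i, (A i).OrdConnected) {i j : ι} (hi : IsClosed (A i))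
    (hj : IsClosed (A j)) (hij : i ⋖ j) (hcover : Icc (p i) (p j) ⊆ ⋃ l, A l) :
    (A i ∩ A j).Nonempty := by
  have hle : p i ≤ p j := (hp hij.lt).le
  have inter_Icc_nonempty : (Icc (p i) (p j) ∩ (A i ∩ A j)).Nonempty :=
    isPreconnected_closed_iff.1 isPreconnected_Icc (A i) (A j) hi hj
      (h.Icc_subset_union_of_covBy hp hA hij hcover)
      ⟨p i, left_mem_Icc.2 hle, h.mem i⟩ ⟨p j, right_mem_Icc.2 hle, h.mem j⟩
  exact inter_Icc_nonempty.mono inter_subset_right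

end IsPrivateSystem

theorem exists_equiv_fin_strictMono_comp [Finite ι] [LinearOrder α] {p : ι → α}
    (hp : p.Injective) : ∃ e : Fin (Nat.card ι) ≃ ι, StrictMono (p ∘ e) := by
  let e₀ : Fin (Nat.card ι) ≃ ι := (Finite.equivFin ι).symm
  let e : Fin (Nat.card ι) ≃ ι := (Tuple.sort (p ∘ e₀)).trans e₀
  exact ⟨e, (Tuple.monotone_sort (p ∘ e₀)).strictMono_of_injective (hp.comp e.injective)⟩

theorem exists_subcover_isPrivateSystem [Finite ι] [LinearOrder α] {A : ι → Set α} {K : Set α}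
    (hcover : K ⊆ ⋃ i, A i) :
    ∃ n ≤ Nat.card ι, ∃ (j : Fin n → ι) (p : Fin n → α), K ⊆ ⋃ k, A (j k) ∧
      (∀ k, p k ∈ K) ∧ StrictMono p ∧ IsPrivateSystem (A ∘ j) p := by
  have univ_cover : K ⊆ ⋃ i ∈ (univ : Set ι), A i := by rwa [biUnion_univ]
  obtain ⟨S, -, hS⟩ :=
    exists_minimal_le_of_wellFoundedLT (fun T : Set ι => K ⊆ ⋃ i ∈ T, A i) univ univ_cover
  obtain ⟨p, hpK, hp⟩ := IsPrivateSystem.exists_of_minimal_cover hS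
  obtain ⟨e, he⟩ := exists_equiv_fin_strictMono_comp hp.injective
  refine ⟨Nat.card S, Finite.card_subtype_le _, fun k => e k, p ∘ e, ?_, fun k => hpK (e k), he,
    hp.comp e.injective⟩
  rw [e.surjective.iUnion_comp fun i : S => A i, ← biUnion_eq_iUnion S fun i _ => A i]
  exact hS.prop

theorem interval_cover_chain_general [Finite ι] [ConditionallyCompleteLinearOrder α]
    [DenselyOrdered α] [TopologicalSpace α] [OrderTopology α] {A : ι → Set α} {K : Set α}
    (hclosed : ∀ i, IsClosed (A i)) (hconn : ∀ i, (A i).OrdConnected) (hK : K.OrdConnected)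
    (hcover : K ⊆ ⋃ i, A i) :
    ∃ n : ℕ, n ≤ Nat.card ι ∧ ∃ j : Fin n → ι,
      K ⊆ ⋃ k, A (j k) ∧
      (∀ k : Fin n, ∀ h : (k : ℕ) + 1 < n, (A (j k) ∩ A (j ⟨(k : ℕ) + 1, h⟩)).Nonempty) ∧
      (∀ k l : Fin n, 2 ≤ |(k : ℤ) - (l : ℤ)| → A (j k) ∩ A (j l) = ∅) := by
  obtain ⟨n, hn, j, p, hjcover, hpK, hpmono, hp⟩ := exists_subcover_isPrivateSystem hcover
  have hjconn (k : Fin n) : ((A ∘ j) k).OrdConnected := hconn (j k)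
  have disjoint_of_add_two_le (k l : Fin n) (hkl : (k : ℕ) + 2 ≤ l) :
      A (j k) ∩ A (j l) = ∅ := by
    let r : Fin n := ⟨k + 1, by omega⟩
    have hkr : k < r := Fin.lt_def.2 (Nat.lt_succ_self k)
    have hrl : r < l := Fin.lt_def.2 hkl
    exact (hp.disjoint_of_lt_of_lt hpmono (hjconn k) (hjconn l) hkr hrl).inter_eq
  refine ⟨n, hn, j, hjcover, fun k h => ?_, fun k l hkl => ?_⟩
  · have hcov : k ⋖ ⟨k + 1, h⟩ := Fin.covBy_iff.2 (Order.covBy_add_one (k : ℕ))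
    exact hp.inter_nonempty_of_covBy hpmono hjconn (hclosed _) (hclosed _) hcov
      ((hK.out (hpK _) (hpK _)).trans hjcover)
  · rcases le_abs.1 hkl with hlk | hkl
    · rw [inter_comm]
      exact disjoint_of_add_two_le l k (by omega)
    · exact disjoint_of_add_two_le k l (by omega)

end

/-- Chain extraction from a finite closed-interval cover of `[0,1]`: one can select
`n ≤ m` of the intervals so that they still cover `[0,1]`, consecutive selected intervals
intersect, and non-consecutive selected intervals are disjoint. -/
theorem interval_cover_chain (m : ℕ) (I : Fin m → Set ℝ)
    (hI : ∀ i, ∃ a b : ℝ, a ≤ b ∧ I i = Icc a b)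
    (hcover : Icc (0 : ℝ) 1 ⊆ ⋃ i, I i) :
    ∃ n : ℕ, n ≤ m ∧ ∃ j : Fin n → Fin m,
      Icc (0 : ℝ) 1 ⊆ ⋃ k, I (j k) ∧
      (∀ k : Fin n, ∀ h : (k : ℕ) + 1 < n, (I (j k) ∩ I (j ⟨(k : ℕ) + 1, h⟩)).Nonempty) ∧
      (∀ k l : Fin n, 2 ≤ |(k : ℤ) - (l : ℤ)| → I (j k) ∩ I (j l) = ∅) := by
  choose a b _ hab using hI
  obtain rfl : I = fun i => Icc (a i) (b i) := funext hab
  simpa only [Nat.card_fin] using interval_cover_chain_general (fun _ => isClosed_Icc)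
    (fun _ => ordConnected_Icc) ordConnected_Icc hcover
end

section
/- Let W ⊂ ℝ² be a bounded measurable set, let 𝓔 be a finite family of compact convex subsets of ℝ², each contained in W and each containing a closed ball of radius 1, and let x ∈ ⋃𝓔. Suppose there is a continuous path contained in ⋃𝓔 from x to a point of the topological boundary ∂W of W. Then there exist n ≤ (2/π)·Vol(W) + 1 and sets e_1, …, e_n ∈ 𝓔 such that x ∈ e_1, e_n ∩ ∂W ≠ ∅, e_k ∩ e_{k+1} ≠ ∅ for 1 ≤ k < n, and e_k ∩ e_l = ∅ whenever |k − l| ≥ 2; moreover there is a polygonal path from x to a point of ∂W contained in e_1 ∪ ⋯ ∪ e_n whose total length is at most ((2/π)·Vol(W) + 1) · diam(W). -/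
open MeasureTheory Real Set

/-!
If a locally finite closed family covers a connected set, all its members that meet this set lie in
one component of the intersection graph: near a point, the only members are those that contain that
point. A shortest walk in the intersection graph from a piece containing `x` to a piece containing
`y` has no chords, so pieces of this chain at index distance at least two are disjoint; the pieces
of even index are therefore pairwise disjoint, and comparing volumes bounds their number. Picking
one point in each intersection of consecutive pieces gives the vertices of a polygonal path with one
edge, of length at most `diam W`, in each piece.
-/

section IntersectionGraph

variable {ι X : Type*} {u : ι → Set X}

/-- The intersection graph (1-skeleton of the nerve) of a family of sets: two distinct indices are
adjacent when the corresponding sets meet. -/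
def intersectionGraph (u : ι → Set X) : SimpleGraph ι :=
  SimpleGraph.fromRel fun i j => (u i ∩ u j).Nonempty

lemma intersectionGraph_adj {i j : ι} :
    (intersectionGraph u).Adj i j ↔ i ≠ j ∧ (u i ∩ u j).Nonempty := by
  simp [intersectionGraph, inter_comm (u j)]

lemma intersectionGraph_reachable_of_mem {i j : ι} {x : X} (hi : x ∈ u i) (hj : x ∈ u j) :
    (intersectionGraph u).Reachable i j := by
  obtain rfl | hij := eq_or_ne i j
  · rfl
  · exact (intersectionGraph_adj.2 ⟨hij, x, hi, hj⟩).reachable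

lemma disjoint_of_two_le_intersectionGraph_dist {i j : ι}
    (h : 2 ≤ (intersectionGraph u).dist i j) : Disjoint (u i) (u j) := by
  have hne : i ≠ j := by rintro rfl; simp at h
  have hadj : ¬(intersectionGraph u).Adj i j := fun hadj => by
    have := SimpleGraph.dist_eq_one_iff_adj.2 hadj
    lia
  rw [disjoint_iff_inter_eq_empty, ← not_nonempty_iff_eq_empty]
  exact fun hmeet => hadj (intersectionGraph_adj.2 ⟨hne, hmeet⟩)

lemma intersectionGraph_reachable_of_isPreconnected [TopologicalSpace X] (hu : LocallyFinite u)
    (hclosed : ∀ i, IsClosed (u i)) {S : Set X} (hS : IsPreconnected S) (hSu : S ⊆ ⋃ i, u i)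
    {x y : X} (hx : x ∈ S) (hy : y ∈ S) {i j : ι} (hi : x ∈ u i) (hj : y ∈ u j) :
    (intersectionGraph u).Reachable i j := by
  refine hS.induction₂ (fun x y => ∀ i j, x ∈ u i → y ∈ u j → (intersectionGraph u).Reachable i j)
    (fun x _ => ?_) (fun x y z _ hy _ hxy hyz i k hi hk => ?_)
    (fun x y _ _ hxy i j hi hj => (hxy j i hj hi).symm) hx hy i j hi hj
  · filter_upwards [nhdsWithin_le_nhds (hu.eventually_subset hclosed x)] with y hyx i j hi hj
    exact intersectionGraph_reachable_of_mem hi (hyx hj)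
  · obtain ⟨j, hj⟩ := mem_iUnion.1 (hSu hy)
    exact (hxy i j hi hj).trans (hyz j k hj hk)

end IntersectionGraph

lemma dist_getVert_of_length_eq_dist {V : Type*} {G : SimpleGraph V} {a b : V} {p : G.Walk a b}
    (hp : p.length = G.dist a b) {i j : ℕ} (hij : i ≤ j) (hj : j ≤ p.length) :
    G.dist (p.getVert i) (p.getVert j) = j - i := by
  have hsub : ((p.take j).drop i).IsSubwalk p :=
    ((p.take j).isSubwalk_drop i).trans (p.isSubwalk_take j)
  have h := SimpleGraph.length_eq_dist_of_subwalk hp hsub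
  rw [SimpleGraph.Walk.drop_length, SimpleGraph.Walk.take_length, SimpleGraph.Walk.take_getVert,
    min_eq_right hij, min_eq_left hj] at h
  exact h.symm

lemma exists_induced_chain {ι X : Type*} [TopologicalSpace X] {u : ι → Set X}
    (hu : LocallyFinite u) (hclosed : ∀ i, IsClosed (u i)) {S : Set X} (hS : IsPreconnected S)
    (hSu : S ⊆ ⋃ i, u i) {x y : X} (hx : x ∈ S) (hy : y ∈ S) :
    ∃ n : ℕ, ∃ c : Fin (n + 1) → ι, x ∈ u (c 0) ∧ y ∈ u (c (Fin.last n)) ∧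
      (∀ k : Fin n, (u (c k.castSucc) ∩ u (c k.succ)).Nonempty) ∧
      ∀ k l : Fin (n + 1), 2 ≤ |(k : ℤ) - (l : ℤ)| → Disjoint (u (c k)) (u (c l)) := by
  obtain ⟨i, hi⟩ := mem_iUnion.1 (hSu hx)
  obtain ⟨j, hj⟩ := mem_iUnion.1 (hSu hy)
  obtain ⟨p, hp⟩ := (intersectionGraph_reachable_of_isPreconnected hu hclosed hS hSu hx hy hi
    hj).exists_walk_length_eq_dist
  refine ⟨p.length, fun k => p.getVert k, by simpa using hi, by simpa using hj,
    fun k => (intersectionGraph_adj.1 (p.adj_getVert_succ k.2)).2, fun k l hkl => ?_⟩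
  wlog hle : (k : ℕ) ≤ l generalizing k l
  · exact (this l k (abs_sub_comm (k : ℤ) l ▸ hkl) (le_of_not_ge hle)).symm
  refine disjoint_of_two_le_intersectionGraph_dist ?_
  rw [dist_getVert_of_length_eq_dist hp hle l.is_le]
  have hgap : (k : ℕ) + 2 ≤ l := by rcases le_abs.1 hkl with h | h <;> omega
  omega

section Measure

variable {α : Type*} [MeasurableSpace α] {μ : Measure α} {W : Set α} {v : ℝ}

lemma card_mul_le_measureReal_of_pairwise_disjoint {ι : Type*} [Fintype ι] {e : ι → Set α}
    (hmeas : ∀ i, MeasurableSet (e i)) (hdisj : Pairwise (Function.onFun Disjoint e))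
    (hsub : ∀ i, e i ⊆ W) (hW : μ W ≠ ⊤) (hv : ∀ i, v ≤ μ.real (e i)) :
    Fintype.card ι * v ≤ μ.real W :=
  calc Fintype.card ι * v = ∑ _i : ι, v := by simp
    _ ≤ ∑ i, μ.real (e i) := Finset.sum_le_sum fun i _ => hv i
    _ = μ.real (⋃ i, e i) :=
      (measureReal_iUnion_fintype hdisj hmeas fun i => measure_ne_top_of_subset (hsub i) hW).symm
    _ ≤ μ.real W := measureReal_mono (iUnion_subset hsub) hW

lemma mul_le_two_mul_measureReal_of_disjoint_nonadjacent {n : ℕ} {e : Fin n → Set α}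
    (hmeas : ∀ k, MeasurableSet (e k)) (hsub : ∀ k, e k ⊆ W) (hW : μ W ≠ ⊤) (hv₀ : 0 ≤ v)
    (hv : ∀ k, v ≤ μ.real (e k))
    (hdisj : ∀ k l : Fin n, 2 ≤ |(k : ℤ) - (l : ℤ)| → Disjoint (e k) (e l)) :
    n * v ≤ 2 * μ.real W := by
  let evenIndex (j : Fin ((n + 1) / 2)) : Fin n := ⟨2 * j, by lia⟩
  have heven : Fintype.card (Fin ((n + 1) / 2)) * v ≤ μ.real W := by
    refine card_mul_le_measureReal_of_pairwise_disjoint (e := fun j => e (evenIndex j))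
      (fun j => hmeas _) (fun i j hij => hdisj _ _ ?_) (fun j => hsub _) hW fun j => hv _
    have := Fin.val_ne_of_ne hij
    simp only [evenIndex, le_abs]
    lia
  have hhalf : (n : ℝ) ≤ 2 * ((n + 1) / 2 : ℕ) := by
    exact_mod_cast (by lia : n ≤ 2 * ((n + 1) / 2))
  rw [Fintype.card_fin] at heven
  calc n * v ≤ 2 * ((n + 1) / 2 : ℕ) * v := by gcongr
    _ ≤ 2 * μ.real W := by linarith

end Measure

lemma exists_vertices_of_chain {X : Type*} {n : ℕ} {e : Fin (n + 1) → Set X} {x y : X}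
    (hx : x ∈ e 0) (hy : y ∈ e (Fin.last n))
    (hmeet : ∀ k : Fin n, (e k.castSucc ∩ e k.succ).Nonempty) :
    ∃ pts : Fin (n + 2) → X, pts 0 = x ∧ pts (Fin.last (n + 1)) = y ∧
      ∀ k : Fin (n + 1), pts k.castSucc ∈ e k ∧ pts k.succ ∈ e k := by
  choose p hp using hmeet
  refine ⟨Fin.cons x (Fin.snoc p y), rfl, by simp [← Fin.succ_last], fun k => ⟨?_, ?_⟩⟩
  · cases k using Fin.cases with
    | zero => exact hx
    | succ k => simpa [← Fin.succ_castSucc] using (hp k).2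
  · cases k using Fin.lastCases with
    | last => simpa using hy
    | cast k => simpa using (hp k).1

lemma exists_polygonal_path_of_chain {E : Type*} [SeminormedAddCommGroup E] [NormedSpace ℝ E]
    {W : Set E} (hW : Bornology.IsBounded W) {n : ℕ} {e : Fin (n + 1) → Set E}
    (hconv : ∀ k, Convex ℝ (e k)) (hsub : ∀ k, e k ⊆ W) {x y : E}
    (hx : x ∈ e 0) (hy : y ∈ e (Fin.last n))
    (hmeet : ∀ k : Fin n, (e k.castSucc ∩ e k.succ).Nonempty) :
    ∃ pts : Fin (n + 2) → E, pts 0 = x ∧ pts (Fin.last (n + 1)) = y ∧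
      (∀ k : Fin (n + 1), segment ℝ (pts k.castSucc) (pts k.succ) ⊆ e k) ∧
      ∑ k : Fin (n + 1), dist (pts k.castSucc) (pts k.succ) ≤ (n + 1 : ℕ) * Metric.diam W := by
  obtain ⟨pts, hfirst, hlast, hmem⟩ := exists_vertices_of_chain hx hy hmeet
  refine ⟨pts, hfirst, hlast, fun k => (hconv k).segment_subset (hmem k).1 (hmem k).2, ?_⟩
  calc ∑ k : Fin (n + 1), dist (pts k.castSucc) (pts k.succ)
      ≤ ∑ _k : Fin (n + 1), Metric.diam W := Finset.sum_le_sum fun k _ =>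
        Metric.dist_le_diam_of_mem hW (hsub k (hmem k).1) (hsub k (hmem k).2)
    _ = (n + 1 : ℕ) * Metric.diam W := by simp

theorem distance_small_scales_general {E ι : Type*} [SeminormedAddCommGroup E] [NormedSpace ℝ E]
    [MeasurableSpace E] [OpensMeasurableSpace E] {μ : Measure E} {W : Set E}
    (hW : Bornology.IsBounded W) (hμW : μ W ≠ ⊤) {u : ι → Set E} (hu : LocallyFinite u)
    (hclosed : ∀ i, IsClosed (u i)) (hconv : ∀ i, Convex ℝ (u i)) (hsub : ∀ i, u i ⊆ W)
    {v : ℝ} (hv : 0 < v) (hvu : ∀ i, v ≤ μ.real (u i)) {S : Set E} (hS : IsPreconnected S)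
    (hSu : S ⊆ ⋃ i, u i) {x y : E} (hx : x ∈ S) (hy : y ∈ S) :
    ∃ n : ℕ, ((n + 1 : ℕ) : ℝ) ≤ 2 / v * μ.real W ∧ ∃ c : Fin (n + 1) → ι,
      x ∈ u (c 0) ∧ y ∈ u (c (Fin.last n)) ∧
      (∀ k : Fin n, (u (c k.castSucc) ∩ u (c k.succ)).Nonempty) ∧
      (∀ k l : Fin (n + 1), 2 ≤ |(k : ℤ) - (l : ℤ)| → Disjoint (u (c k)) (u (c l))) ∧
      ∃ pts : Fin (n + 2) → E, pts 0 = x ∧ pts (Fin.last (n + 1)) = y ∧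
        (∀ k : Fin (n + 1), segment ℝ (pts k.castSucc) (pts k.succ) ⊆ u (c k)) ∧
        ∑ k : Fin (n + 1), dist (pts k.castSucc) (pts k.succ) ≤
          2 / v * μ.real W * Metric.diam W := by
  obtain ⟨n, c, hxc, hyc, hmeet, hdisj⟩ := exists_induced_chain hu hclosed hS hSu hx hy
  have hcard : ((n + 1 : ℕ) : ℝ) ≤ 2 / v * μ.real W := by
    rw [div_mul_eq_mul_div, le_div_iff₀ hv]
    exact mul_le_two_mul_measureReal_of_disjoint_nonadjacent
      (fun k => (hclosed (c k)).measurableSet) (fun k => hsub (c k)) hμW hv.le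
      (fun k => hvu (c k)) hdisj
  obtain ⟨pts, hfirst, hlast, hseg, hlen⟩ := exists_polygonal_path_of_chain hW
    (fun k => hconv (c k)) (fun k => hsub (c k)) hxc hyc hmeet
  exact ⟨n, hcard, c, hxc, hyc, hmeet, hdisj, pts, hfirst, hlast, hseg,
    hlen.trans (mul_le_mul_of_nonneg_right hcard Metric.diam_nonneg)⟩

lemma pi_le_volume_real_of_closedBall_subset {e : Set (EuclideanSpace ℝ (Fin 2))}
    {c : EuclideanSpace ℝ (Fin 2)} (hc : Metric.closedBall c 1 ⊆ e) (he : volume e ≠ ⊤) :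
    π ≤ volume.real e :=
  calc π = volume.real (Metric.closedBall c 1) := by
        simp [measureReal_def, EuclideanSpace.volume_closedBall_fin_two, pi_pos.le]
    _ ≤ volume.real e := measureReal_mono hc he

/-- Distance on small scales: if a covered set is formed by finitely many compact convex
pieces inside a bounded region `W`, each containing a closed unit ball, and a point `x` of
the covered set is joined to `∂W` by a continuous path inside the covered set, then `x`
can be joined to `∂W` using a chain of at most `(2/π) Vol(W) + 1` pieces in which only
consecutive pieces meet, and by a polygonal path inside the union of these pieces of total
length at most `((2/π) Vol(W) + 1) · diam(W)`. -/
theorem distance_small_scales (W : Set (EuclideanSpace ℝ (Fin 2)))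
    (hWb : Bornology.IsBounded W) (hWm : MeasurableSet W)
    (ℰ : Finset (Set (EuclideanSpace ℝ (Fin 2))))
    (hcomp : ∀ e ∈ ℰ, IsCompact e) (hconv : ∀ e ∈ ℰ, Convex ℝ e)
    (hsub : ∀ e ∈ ℰ, e ⊆ W)
    (hball : ∀ e ∈ ℰ, ∃ c : EuclideanSpace ℝ (Fin 2), Metric.closedBall c 1 ⊆ e)
    (x : EuclideanSpace ℝ (Fin 2)) (hx : x ∈ ⋃₀ (ℰ : Set (Set (EuclideanSpace ℝ (Fin 2)))))
    (hpath : ∃ f : ℝ → EuclideanSpace ℝ (Fin 2), ContinuousOn f (Icc 0 1) ∧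
      f 0 = x ∧ f 1 ∈ frontier W ∧
      ∀ t ∈ Icc (0 : ℝ) 1, f t ∈ ⋃₀ (ℰ : Set (Set (EuclideanSpace ℝ (Fin 2))))) :
    ∃ n : ℕ, ∃ hn : 0 < n, (n : ℝ) ≤ 2 / π * (volume W).toReal + 1 ∧
      ∃ e : Fin n → Set (EuclideanSpace ℝ (Fin 2)),
        (∀ k, e k ∈ ℰ) ∧
        x ∈ e ⟨0, hn⟩ ∧
        (e ⟨n - 1, by omega⟩ ∩ frontier W).Nonempty ∧
        (∀ k : Fin n, ∀ h : (k : ℕ) + 1 < n, (e k ∩ e ⟨(k : ℕ) + 1, h⟩).Nonempty) ∧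
        (∀ k l : Fin n, 2 ≤ |(k : ℤ) - (l : ℤ)| → e k ∩ e l = ∅) ∧
        ∃ m : ℕ, ∃ pts : Fin (m + 1) → EuclideanSpace ℝ (Fin 2),
          pts 0 = x ∧ pts (Fin.last m) ∈ frontier W ∧
          (∀ i : Fin m, segment ℝ (pts i.castSucc) (pts i.succ) ⊆ ⋃ k, e k) ∧
          (∑ i : Fin m, dist (pts i.castSucc) (pts i.succ)) ≤
            (2 / π * (volume W).toReal + 1) * Metric.diam W := by
  obtain ⟨f, hf, rfl, hfW, hcov⟩ := hpath
  obtain ⟨n, hcard, c, hxc, hyc, hmeet, hdisj, pts, hfirst, hlast, hseg, hlen⟩ :=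
    distance_small_scales_general (μ := volume) (u := fun e : ℰ => (e : Set _)) hWb
      hWb.measure_lt_top.ne (locallyFinite_of_finite _) (fun e => (hcomp e e.2).isClosed)
      (fun e => hconv e e.2) (fun e => hsub e e.2) pi_pos
      (fun e => (hball e e.2).elim fun _ hc =>
        pi_le_volume_real_of_closedBall_subset hc (hcomp e e.2).measure_ne_top)
      (isPreconnected_Icc.image f hf) (image_subset_iff.2 fun t ht => by simpa using hcov t ht)
      (mem_image_of_mem f (left_mem_Icc.2 zero_le_one))
      (mem_image_of_mem f (right_mem_Icc.2 zero_le_one))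
  exact ⟨n + 1, n.succ_pos, hcard.trans (le_add_of_nonneg_right zero_le_one), fun k => c k,
    fun k => (c k).2, hxc, ⟨f 1, hyc, hfW⟩, fun k hk => hmeet ⟨k, by lia⟩,
    fun k l hkl => (hdisj k l hkl).inter_eq, n + 1, pts, hfirst, hlast ▸ hfW,
    fun k => (hseg k).trans (subset_iUnion_of_subset k subset_rfl),
    hlen.trans (mul_le_mul_of_nonneg_right (le_add_of_nonneg_right zero_le_one)
      Metric.diam_nonneg)⟩
end
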